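/- arXiv:2412.20825 — 3 statements merged into one kernel-verified Lean document; each statement's English description precedes it below -/
import Mathlib

section
/- Let A and B be n×n Hermitian matrices with ker B ⊆ ker A. Then n_−(A − B) = n_−(A) − n_−(B) + n_−(P_A B⁺ P_A − A⁺) + n_0(A) − n_0(B), where X⁺ denotes the Moore–Penrose pseudoinverse, P_A = A A⁺ is the orthogonal projector onto the range of A, and n_0(X) = dim ker X. -/
/-!
The identity comes from computing in two ways the index of the Hermitian form
`q(x, y) = -x*Bx + x*Ay + y*Ax - y*Ay` on `ℂⁿ × ℂⁿ`.

* Completing the square in `y` gives `q(x, y) = x*(A - B)x - (y - x)*A(y - x)`, so the index is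
  `n₋(A - B) + n₋(-A)`.
* Since `ker B ⊆ ker A`, the matrix `T = (B⁺)*A` satisfies `BT = A`. Completing the square in `x`
  gives `q(x, y) = -(x - Ty)*B(x - Ty) + y*(AB⁺A - A)y`, so the index is
  `n₋(-B) + n₋(AB⁺A - A)`.

With `C = P_A B⁺ P_A - A⁺` one has `AB⁺A - A = ACA` and `C = (A⁺)*(ACA)A⁺`, so both matrices have
the same index (`negIdxM_conj_le`). The result follows from `n₋(X) + n₋(-X) + n₀(X) = n` for
`X = A, B` (`negIdxM_add_neg_add_ker`). Indices are computed by diagonalization: a form that reads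
`∑ lᵢ |zᵢ|²` in some linear coordinates has index `#{i | lᵢ < 0}` (`formNegIdx_of_diag`).
-/

open Matrix

/-- The negative index (Morse index) of a sesquilinear form: the maximal dimension of a
subspace on which it is negative definite. -/
noncomputable def formNegIdx {V : Type*} [AddCommGroup V] [Module ℂ V]
    (Q : V → V → ℂ) : ℕ :=
  sSup {d : ℕ | ∃ W : Submodule ℂ V, Module.finrank ℂ W = d ∧
    ∀ x ∈ W, x ≠ 0 → (Q x x).re < 0}

/-- The number of negative eigenvalues (Morse index) of a Hermitian matrix, as the
maximal dimension of a subspace on which the associated form is negative definite. -/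
noncomputable def negIdxM {n : ℕ} (A : Matrix (Fin n) (Fin n) ℂ) : ℕ :=
  formNegIdx (fun x y : Fin n → ℂ => star x ⬝ᵥ A.mulVec y)

/-- `Xp` is the Moore–Penrose pseudoinverse of `X`. -/
def IsMoorePenrose {n : ℕ} (X Xp : Matrix (Fin n) (Fin n) ℂ) : Prop :=
  X * Xp * X = X ∧ Xp * X * Xp = Xp ∧ (X * Xp)ᴴ = X * Xp ∧ (Xp * X)ᴴ = Xp * X

lemma bddAbove_negIdx {V : Type*} [AddCommGroup V] [Module ℂ V] [FiniteDimensional ℂ V]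
    (Q : V → V → ℂ) :
    BddAbove {d : ℕ | ∃ W : Submodule ℂ V, Module.finrank ℂ W = d ∧
      ∀ x ∈ W, x ≠ 0 → (Q x x).re < 0} :=
  ⟨Module.finrank ℂ V, by rintro d ⟨W, rfl, -⟩; exact W.finrank_le⟩

lemma le_formNegIdx {V : Type*} [AddCommGroup V] [Module ℂ V] [FiniteDimensional ℂ V]
    (Q : V → V → ℂ) (W : Submodule ℂ V) (hW : ∀ x ∈ W, x ≠ 0 → (Q x x).re < 0) :
    Module.finrank ℂ W ≤ formNegIdx Q :=
  le_csSup (bddAbove_negIdx Q) ⟨W, rfl, hW⟩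

lemma formNegIdx_le {V : Type*} [AddCommGroup V] [Module ℂ V]
    (Q : V → V → ℂ) (k : ℕ)
    (h : ∀ W : Submodule ℂ V, (∀ x ∈ W, x ≠ 0 → (Q x x).re < 0) → Module.finrank ℂ W ≤ k) :
    formNegIdx Q ≤ k := by
  apply csSup_le
  · exact ⟨0, ⊥, by simp, by simp +contextual⟩
  · rintro d ⟨W, rfl, hW⟩
    exact h W hW

/-- The subspace on which all coordinates violating `p` vanish. -/
def coordSubspace {V ι : Type*} [AddCommGroup V] [Module ℂ V]
    (e : V ≃ₗ[ℂ] (ι → ℂ)) (p : ι → Prop) : Submodule ℂ V :=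
  (⨅ i ∈ {i | ¬ p i}, LinearMap.ker (LinearMap.proj i : (ι → ℂ) →ₗ[ℂ] ℂ)).comap
    (e : V →ₗ[ℂ] (ι → ℂ))

lemma mem_coordSubspace {V ι : Type*} [AddCommGroup V] [Module ℂ V]
    (e : V ≃ₗ[ℂ] (ι → ℂ)) (p : ι → Prop) (x : V) :
    x ∈ coordSubspace e p ↔ ∀ i, ¬ p i → e x i = 0 := by
  simp [coordSubspace, Submodule.mem_iInf]

lemma finrank_coordSubspace {V ι : Type*} [AddCommGroup V] [Module ℂ V] [Fintype ι]
    (e : V ≃ₗ[ℂ] (ι → ℂ)) (p : ι → Prop) [DecidablePred p] :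
    Module.finrank ℂ (coordSubspace e p) = Fintype.card {i // p i} := by
  have hd : Disjoint {i | p i} {i | ¬ p i} := by
    rw [Set.disjoint_left]; intro i hi hi'; exact hi' hi
  have hu : Set.univ ⊆ {i | p i} ∪ {i | ¬ p i} := fun i _ => by
    by_cases h : p i <;> simp [h]
  let _ : DecidablePred fun i => i ∈ {i | p i} := fun i => inferInstanceAs (Decidable (p i))
  have h1 := (LinearMap.iInfKerProjEquiv ℂ (fun _ : ι => ℂ) hd hu).finrank_eq
  have h2 := (e.submoduleMap (coordSubspace e p)).finrank_eq
  rw [h2]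
  have h3 : Submodule.map (e : V →ₗ[ℂ] (ι → ℂ)) (coordSubspace e p)
      = ⨅ i ∈ {i | ¬ p i}, LinearMap.ker (LinearMap.proj i : (ι → ℂ) →ₗ[ℂ] ℂ) :=
    Submodule.map_comap_eq_of_surjective e.surjective _
  rw [h3, h1, Module.finrank_pi]
  rfl

/-- **Sylvester's law of inertia**, for the negative index: the upper bound holds because a
negative definite subspace meets the span of the nonnegative coordinates only in `0`. -/
lemma formNegIdx_of_diag {V ι : Type*} [AddCommGroup V] [Module ℂ V] [Fintype ι]
    (Q : V → V → ℂ) (e : V ≃ₗ[ℂ] (ι → ℂ)) (l : ι → ℝ)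
    (h : ∀ x, (Q x x).re = ∑ i, l i * ‖e x i‖ ^ 2) :
    formNegIdx Q = Fintype.card {i // l i < 0} := by
  have : FiniteDimensional ℂ V := e.symm.finiteDimensional
  apply le_antisymm
  · apply formNegIdx_le
    intro W hW
    have hdisj : Disjoint W (coordSubspace e (fun i => ¬ l i < 0)) := by
      rw [Submodule.disjoint_def]
      intro x hx hx'
      by_contra hne
      have h1 := hW x hx hne
      rw [h] at h1
      refine absurd h1 (not_lt.2 (Finset.sum_nonneg fun i _ => ?_))
      rw [mem_coordSubspace] at hx'
      by_cases hi : l i < 0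
      · simp [hx' i (not_not.2 hi)]
      · have := not_lt.1 hi
        positivity
    have h2 := Submodule.finrank_add_finrank_le_of_disjoint hdisj
    rw [finrank_coordSubspace, e.finrank_eq, Module.finrank_pi, Fintype.card_subtype_compl] at h2
    have h3 := Fintype.card_subtype_le (fun i => l i < 0)
    omega
  · rw [← finrank_coordSubspace e (fun i => l i < 0)]
    apply le_formNegIdx
    intro x hx hne
    rw [mem_coordSubspace] at hx
    rw [h]
    have hex : e x ≠ 0 := by simpa using hne
    obtain ⟨j, hj⟩ := Function.ne_iff.1 hex
    have hj : e x j ≠ 0 := hj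
    have hlj : l j < 0 := by
      by_contra hc
      exact hj (hx j hc)
    apply Finset.sum_neg'
    · intro i _
      by_cases hi : l i < 0
      · exact mul_nonpos_of_nonpos_of_nonneg hi.le (by positivity)
      · simp [hx i hi]
    · exact ⟨j, Finset.mem_univ _, mul_neg_of_neg_of_pos hlj (by positivity)⟩

/-- Unitary diagonalization of a Hermitian form, packaged with the count of zero eigenvalues. -/
lemma exists_diag {n : ℕ} {A : Matrix (Fin n) (Fin n) ℂ} (hA : A.IsHermitian) :
    ∃ (e : (Fin n → ℂ) ≃ₗ[ℂ] (Fin n → ℂ)) (l : Fin n → ℝ),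
      (∀ x, (star x ⬝ᵥ A.mulVec x).re = ∑ i, l i * ‖e x i‖ ^ 2) ∧
      A.rank = Fintype.card {i // l i ≠ 0} := by
  set U := (hA.eigenvectorUnitary : Matrix (Fin n) (Fin n) ℂ)
  have h1 : star U * U = 1 := Unitary.coe_star_mul_self _
  have h2 : U * star U = 1 := Unitary.coe_mul_star_self _
  refine ⟨Matrix.toLin'OfInv h2 h1, hA.eigenvalues, ?_, hA.rank_eq_card_non_zero_eigs⟩
  intro x
  have hs : A = U * diagonal (RCLike.ofReal ∘ hA.eigenvalues) * star U := by
    have := hA.spectral_theorem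
    rwa [Unitary.conjStarAlgAut_apply] at this
  have he : Matrix.toLin'OfInv h2 h1 x = (star U).mulVec x := rfl
  have hq : star x ⬝ᵥ A.mulVec x = star ((star U).mulVec x) ⬝ᵥ
      (diagonal (RCLike.ofReal ∘ hA.eigenvalues)).mulVec ((star U).mulVec x) := by
    conv_lhs => rw [hs]
    rw [star_mulVec, ← dotProduct_mulVec, mulVec_mulVec, mulVec_mulVec, star_eq_conjTranspose,
      conjTranspose_conjTranspose, mul_assoc]
  rw [he, hq]
  generalize (star U).mulVec x = z
  simp only [dotProduct, mulVec_diagonal, Complex.re_sum, Pi.star_apply, Function.comp]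
  refine Finset.sum_congr rfl fun i _ => ?_
  rw [Complex.sq_norm, Complex.normSq_apply]
  simp
  ring

/-- A form congruent to the orthogonal sum of two Hermitian matrices has the sum of their
indices. -/
lemma formNegIdx_prod {n : ℕ} {V : Type*} [AddCommGroup V] [Module ℂ V]
    {X Y : Matrix (Fin n) (Fin n) ℂ} (hX : X.IsHermitian) (hY : Y.IsHermitian)
    (Q : V → V → ℂ) (e : V ≃ₗ[ℂ] (Fin n → ℂ) × (Fin n → ℂ))
    (h : ∀ v, Q v v = star (e v).1 ⬝ᵥ X.mulVec (e v).1 + star (e v).2 ⬝ᵥ Y.mulVec (e v).2) :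
    formNegIdx Q = negIdxM X + negIdxM Y := by
  obtain ⟨eX, l, hl, -⟩ := exists_diag hX
  obtain ⟨eY, m, hm, -⟩ := exists_diag hY
  unfold negIdxM
  rw [formNegIdx_of_diag _ eX l hl, formNegIdx_of_diag _ eY m hm,
    formNegIdx_of_diag Q ((e.trans (eX.prodCongr eY)).trans
      (LinearEquiv.sumArrowLequivProdArrow (Fin n) (Fin n) ℂ ℂ).symm) (Sum.elim l m)]
  · rw [← Fintype.card_sum]
    exact Fintype.card_congr (Equiv.subtypeSum (p := fun i => Sum.elim l m i < 0))
  · intro v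
    rw [h, Complex.add_re, hl, hm, Fintype.sum_sum_type]
    rfl

lemma negIdxM_add_neg_add_ker {n : ℕ} {A : Matrix (Fin n) (Fin n) ℂ} (hA : A.IsHermitian) :
    negIdxM A + negIdxM (-A) + Module.finrank ℂ (LinearMap.ker A.mulVecLin) = n := by
  obtain ⟨e, l, hl, hr⟩ := exists_diag hA
  have h1 : negIdxM A = Fintype.card {i // l i < 0} := formNegIdx_of_diag _ e l hl
  have h2 : negIdxM (-A) = Fintype.card {i // (-l) i < 0} := by
    apply formNegIdx_of_diag _ e (-l)
    intro x
    simp [neg_mulVec, hl]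
  have h3 := LinearMap.finrank_range_add_finrank_ker A.mulVecLin
  rw [Module.finrank_pi, Fintype.card_fin] at h3
  have h4 : Fintype.card {i // l i ≠ 0}
      = Fintype.card {i // l i < 0} + Fintype.card {i // (-l) i < 0} := by
    rw [← Fintype.card_subtype_or_disjoint]
    · apply Fintype.card_congr
      apply Equiv.subtypeEquivRight
      intro i
      simp [lt_or_lt_iff_ne]
    · rw [Pi.disjoint_iff]
      intro i
      simp only [Pi.neg_apply, Left.neg_neg_iff, Prop.disjoint_iff]
      rintro ⟨h, h'⟩
      linarith
  have h5 : A.rank = Module.finrank ℂ (LinearMap.range A.mulVecLin) := rfl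
  omega

/-- `T` maps a negative definite subspace of `TᴴCT` injectively onto one of `C`, for any `T`. -/
lemma negIdxM_conj_le {n : ℕ} (C T : Matrix (Fin n) (Fin n) ℂ) :
    negIdxM (Tᴴ * C * T) ≤ negIdxM C := by
  apply formNegIdx_le
  intro W hW
  have key : ∀ x, star x ⬝ᵥ (Tᴴ * C * T).mulVec x
      = star (T.mulVec x) ⬝ᵥ C.mulVec (T.mulVec x) := fun x => by
    rw [star_mulVec, ← dotProduct_mulVec, mulVec_mulVec, mulVec_mulVec, mul_assoc]
  simp only [key] at hW
  have hinj : Function.Injective (T.mulVecLin.domRestrict W) := by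
    rw [← LinearMap.ker_eq_bot, LinearMap.ker_eq_bot']
    rintro ⟨x, hx⟩ h0
    have h0 : T.mulVec x = 0 := h0
    by_contra hne
    have := hW x hx (fun h => hne (by simpa using h))
    simp [h0] at this
  have hr := LinearMap.finrank_range_of_inj hinj
  rw [← hr]
  apply le_formNegIdx
  rintro _ ⟨⟨x, hx⟩, rfl⟩ hne
  apply hW x hx
  rintro rfl
  exact hne (by simp)

/-- If `ker B ⊆ ker A` then
`n₋(A − B) = n₋(A) − n₋(B) + n₋(P_A B⁺ P_A − A⁺) + n₀(A) − n₀(B)`, with `P_A = A A⁺`. -/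
theorem morse_index_difference_kerB_subset (n : ℕ)
    (A B Ap Bp : Matrix (Fin n) (Fin n) ℂ)
    (hA : A.IsHermitian) (hB : B.IsHermitian)
    (hker : LinearMap.ker B.mulVecLin ≤ LinearMap.ker A.mulVecLin)
    (hAp : IsMoorePenrose A Ap) (hBp : IsMoorePenrose B Bp) :
    (negIdxM (A - B) : ℤ)
      = (negIdxM A : ℤ) - negIdxM B + negIdxM ((A * Ap) * Bp * (A * Ap) - Ap)
        + Module.finrank ℂ ↥(LinearMap.ker A.mulVecLin)
        - Module.finrank ℂ ↥(LinearMap.ker B.mulVecLin) := by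
  obtain ⟨a1, a2, a3, a4⟩ := hAp
  obtain ⟨b1, -, -, -⟩ := hBp
  have hAe : Aᴴ = A := hA
  have hBe : Bᴴ = B := hB
  -- The columns of `1 - B⁺B` lie in `ker B`, hence in `ker A`.
  have hABB : A * Bp * B = A := by
    have h0 : A * (1 - Bp * B) = 0 := by
      apply Matrix.ext_of_mulVec_single
      intro i
      rw [← mulVec_mulVec, zero_mulVec]
      apply hker
      change B.mulVec _ = 0
      rw [mulVec_mulVec, mul_sub, mul_one, ← mul_assoc, b1, sub_self, zero_mulVec]
    rw [mul_sub, mul_one, ← mul_assoc, sub_eq_zero] at h0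
    exact h0.symm
  set T := Bpᴴ * A with hT
  have hTH : Tᴴ = A * Bp := by rw [hT, conjTranspose_mul, conjTranspose_conjTranspose, hAe]
  have hTB : Tᴴ * B = A := by rw [hTH, hABB]
  have hBT : B * T = A := by
    have := congrArg conjTranspose hTB
    rwa [conjTranspose_mul, conjTranspose_conjTranspose, hBe, hAe] at this
  have hTBT : Tᴴ * B * T = A * Bp * A := by rw [mul_assoc, hBT, hTH]
  have hABA : (A * Bp * A).IsHermitian := by
    rw [← hTBT]; exact isHermitian_conjTranspose_mul_mul T hB
  let Q : (Fin n → ℂ) × (Fin n → ℂ) → (Fin n → ℂ) × (Fin n → ℂ) → ℂ := fun v w =>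
    -(star v.1 ⬝ᵥ B.mulVec w.1) + star v.1 ⬝ᵥ A.mulVec w.2 + star v.2 ⬝ᵥ A.mulVec w.1
      - star v.2 ⬝ᵥ A.mulVec w.2
  have hQ1 : formNegIdx Q = negIdxM (A - B) + negIdxM (-A) := by
    apply formNegIdx_prod (hA.sub hB) hA.neg Q
      (LinearEquiv.skewProd (LinearEquiv.refl ℂ _) (LinearEquiv.refl ℂ _) (-LinearMap.id))
    rintro ⟨x, y⟩
    simp only [Q, LinearEquiv.skewProd_apply, LinearEquiv.refl_apply, LinearMap.neg_apply,
      LinearMap.id_apply, sub_mulVec, neg_mulVec, mulVec_add, mulVec_neg, star_add, star_neg,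
      dotProduct_add, add_dotProduct, dotProduct_sub, dotProduct_neg, neg_dotProduct]
    ring
  have hQ2 : formNegIdx Q = negIdxM (A * Bp * A - A) + negIdxM (-B) := by
    apply formNegIdx_prod (hABA.sub hA) hB.neg Q
      ((LinearEquiv.prodComm ℂ _ _).trans
        (LinearEquiv.skewProd (LinearEquiv.refl ℂ _) (LinearEquiv.refl ℂ _) (-T.mulVecLin)))
    rintro ⟨x, y⟩
    have e1 : star (T.mulVec y) ⬝ᵥ B.mulVec x = star y ⬝ᵥ A.mulVec x := by
      rw [star_mulVec, ← dotProduct_mulVec, mulVec_mulVec, hTB]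
    have e2 : B.mulVec (T.mulVec y) = A.mulVec y := by rw [mulVec_mulVec, hBT]
    have e3 : star (T.mulVec y) ⬝ᵥ A.mulVec y = star y ⬝ᵥ (A * Bp * A).mulVec y := by
      rw [star_mulVec, ← dotProduct_mulVec, mulVec_mulVec, hTH]
    simp only [Q, LinearEquiv.trans_apply, LinearEquiv.prodComm_apply, Prod.swap_prod_mk,
      LinearEquiv.skewProd_apply, LinearEquiv.refl_apply, LinearMap.neg_apply,
      mulVecLin_apply, sub_mulVec, neg_mulVec, mulVec_add, mulVec_neg, star_add, star_neg,
      dotProduct_add, add_dotProduct, dotProduct_sub, dotProduct_neg, neg_dotProduct, e1, e2, e3]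
    ring
  set C := (A * Ap) * Bp * (A * Ap) - Ap with hC
  have hAP : A * (A * Ap) = A := by
    have := congrArg conjTranspose a1
    rwa [conjTranspose_mul, a3, hAe] at this
  have hACA : Aᴴ * C * A = A * Bp * A - A := by
    have h : A * C * A = (A * (A * Ap)) * Bp * (A * Ap * A) - A * Ap * A := by
      rw [hC]; noncomm_ring
    rw [hAe, h, hAP, a1]
  -- `A⁺A` is Hermitian, so `A⁺ = A (A⁺)* A⁺` has its range inside that of `A`.
  have hPAp : A * Ap * Ap = Ap := by
    have h : Ap * A = A * Apᴴ := by rw [← a4, conjTranspose_mul, hAe]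
    calc A * Ap * Ap = A * Ap * (Ap * A * Ap) := by rw [a2]
      _ = (A * Ap * A) * Apᴴ * Ap := by rw [h]; noncomm_ring
      _ = Ap := by rw [a1, ← h, a2]
  have hCC : Apᴴ * (Aᴴ * C * A) * Ap = C := by
    have h : Apᴴ * (Aᴴ * C * A) * Ap = (A * Ap)ᴴ * C * (A * Ap) := by
      rw [conjTranspose_mul]; noncomm_ring
    have hPP : A * Ap * (A * Ap) = A * Ap := by rw [← mul_assoc, a1]
    have h' : A * Ap * C * (A * Ap) = (A * Ap * (A * Ap)) * Bp * (A * Ap * (A * Ap))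
        - (A * Ap * Ap) * (A * Ap) := by
      rw [hC]; noncomm_ring
    rw [h, a3, h', hPP, hPAp, ← mul_assoc Ap, a2]
  have hidx : negIdxM (A * Bp * A - A) = negIdxM C := by
    rw [← hACA]
    apply le_antisymm (negIdxM_conj_le C A)
    conv_lhs => rw [← hCC]
    exact negIdxM_conj_le _ Ap
  have hnA := negIdxM_add_neg_add_ker hA
  have hnB := negIdxM_add_neg_add_ker hB
  omega
end

section
/- For any invertible n×n Hermitian matrices A and B, n_−(A + B) + n_0(A + B) + n_−(A^{−1} + B^{−1}) = n_−(A) + n_−(B). -/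
/-!
Write `N(X)` for the negative index, so that `N(-X)` is the positive index. On `ℂⁿ × ℂⁿ` consider
the Hermitian form `Q(u, v) = u* A u + v* B v`. Restricted to the diagonal it is `A + B`; the
`Q`-orthogonal complement of the diagonal is `{(A⁻¹ w, -B⁻¹ w)}`, on which `Q` is `A⁻¹ + B⁻¹`.
The images of maximal negative subspaces of these two restrictions, together with the diagonal copy
of `ker (A + B)`, span a `Q`-nonpositive subspace of dimension
`N(A + B) + n₀(A + B) + N(A⁻¹ + B⁻¹)`. It meets every positive definite subspace trivially, so
(`negIdxM_main_le`)

`N(A + B) + n₀(A + B) + N(A⁻¹ + B⁻¹) + N(-A) + N(-B) ≤ 2n`.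

The same inequality holds for `-A, -B`. By the spectral theorem (`le_negIdxM_add`) every Hermitian
`X` satisfies `n ≤ N(X) + N(-X) + n₀(X)`, and `n₀(A⁻¹ + B⁻¹) = n₀(A + B)`. Hence the two
inequalities add up to an equality, both are equalities, and `N(-A) = n - N(A)`,
`N(-B) = n - N(B)` give the claim.
-/

open Matrix

section Index

variable {n : ℕ}

theorem negIdxM_bddAbove (A : Matrix (Fin n) (Fin n) ℂ) :
    BddAbove {d : ℕ | ∃ W : Submodule ℂ (Fin n → ℂ), Module.finrank ℂ W = d ∧
      ∀ x ∈ W, x ≠ 0 → (star x ⬝ᵥ A.mulVec x).re < 0} := by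
  refine ⟨n, ?_⟩
  rintro d ⟨W, rfl, -⟩
  simpa using Submodule.finrank_le W

theorem finrank_le_negIdxM (A : Matrix (Fin n) (Fin n) ℂ) (W : Submodule ℂ (Fin n → ℂ))
    (hW : ∀ x ∈ W, x ≠ 0 → (star x ⬝ᵥ A.mulVec x).re < 0) :
    Module.finrank ℂ W ≤ negIdxM A :=
  le_csSup (negIdxM_bddAbove A) ⟨W, rfl, hW⟩

theorem exists_finrank_eq_negIdxM (A : Matrix (Fin n) (Fin n) ℂ) :
    ∃ W : Submodule ℂ (Fin n → ℂ), Module.finrank ℂ W = negIdxM A ∧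
      ∀ x ∈ W, x ≠ 0 → (star x ⬝ᵥ A.mulVec x).re < 0 := by
  refine Nat.sSup_mem ?_ (negIdxM_bddAbove A)
  refine ⟨0, ⊥, by simp, ?_⟩
  intro x hx h0
  exact absurd ((Submodule.mem_bot ℂ).1 hx) h0

theorem negIdxM_add_neg_le (A : Matrix (Fin n) (Fin n) ℂ) :
    negIdxM A + negIdxM (-A) ≤ n := by
  obtain ⟨W, hW, hWn⟩ := exists_finrank_eq_negIdxM A
  obtain ⟨P, hP, hPn⟩ := exists_finrank_eq_negIdxM (-A)
  have hd : Disjoint W P := by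
    rw [Submodule.disjoint_def]
    intro x hxW hxP
    by_contra h0
    have h1 := hWn x hxW h0
    have h2 := hPn x hxP h0
    simp only [Matrix.neg_mulVec, dotProduct_neg, Complex.neg_re] at h2
    linarith
  have h := Submodule.finrank_add_finrank_le_of_disjoint hd
  rw [hW, hP] at h
  simpa using h

/-- The spectral theorem gives a negative definite subspace: if `A = U D U*` with `U` unitary and
`D` real diagonal, use the `U`-image of the coordinate subspace where `D` is negative. The factor
`D` is passed as a real vector so that the lemma also applies to `-A`. -/
theorem card_neg_le_negIdxM (A U : Matrix (Fin n) (Fin n) ℂ) (d : Fin n → ℝ)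
    (hU : Uᴴ * U = 1) (hA : Uᴴ * A * U = Matrix.diagonal (fun i => (d i : ℂ))) :
    Fintype.card {i // d i < 0} ≤ negIdxM A := by
  let e : ({i // d i < 0} → ℂ) →ₗ[ℂ] (Fin n → ℂ) :=
    Function.ExtendByZero.linearMap ℂ Subtype.val
  have he : Function.Injective e := by
    intro x y hxy
    funext i
    have := congrFun hxy i.1
    simpa [e, Subtype.val_injective.extend_apply] using this
  have he0 : ∀ y i, ¬ d i < 0 → e y i = 0 := by
    intro y i hi
    have : ¬ ∃ a : {i // d i < 0}, a.1 = i := by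
      rintro ⟨a, rfl⟩
      exact hi a.2
    simp [e, Function.extend_apply' _ _ _ this]
  have hUi : Function.Injective U.mulVecLin := by
    intro x y hxy
    have := congrArg (Uᴴ.mulVec) hxy
    simpa [Matrix.mulVec_mulVec, hU] using this
  have hf : Function.Injective (U.mulVecLin ∘ₗ e) := hUi.comp he
  have key := finrank_le_negIdxM A (LinearMap.range (U.mulVecLin ∘ₗ e)) ?_
  · rw [LinearMap.finrank_range_of_inj hf] at key
    simpa using key
  rintro _ ⟨y, rfl⟩ h0
  have hy0 : e y ≠ 0 := by
    intro h
    apply h0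
    simp [h]
  have hform : star (U.mulVec (e y)) ⬝ᵥ A.mulVec (U.mulVec (e y))
      = star (e y) ⬝ᵥ (Uᴴ * A * U).mulVec (e y) := by
    rw [Matrix.star_mulVec, ← Matrix.dotProduct_mulVec, Matrix.mulVec_mulVec,
      Matrix.mulVec_mulVec, Matrix.mul_assoc]
  have hre : (star (U.mulVec (e y)) ⬝ᵥ A.mulVec (U.mulVec (e y))).re
      = ∑ i, d i * Complex.normSq (e y i) := by
    rw [hform, hA]
    simp only [dotProduct, Matrix.mulVec_diagonal, Complex.re_sum, Pi.star_apply]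
    refine Finset.sum_congr rfl fun i _ => ?_
    simp [Complex.normSq_apply]
    ring
  change (star (U.mulVec (e y)) ⬝ᵥ A.mulVec (U.mulVec (e y))).re < 0
  rw [hre]
  obtain ⟨i, hi⟩ := Function.ne_iff.1 hy0
  refine Finset.sum_neg' (fun j _ => ?_) ⟨i, Finset.mem_univ i, ?_⟩
  · by_cases hj : d j < 0
    · exact mul_nonpos_of_nonpos_of_nonneg hj.le (Complex.normSq_nonneg _)
    · simp [he0 y j hj]
  · have hdi : d i < 0 := by
      by_contra h
      exact hi (he0 y i h)
    exact mul_neg_of_neg_of_pos hdi (Complex.normSq_pos.2 hi)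

theorem finrank_ker_add_rank (A : Matrix (Fin n) (Fin n) ℂ) :
    Module.finrank ℂ (LinearMap.ker A.mulVecLin) + A.rank = n := by
  have := LinearMap.finrank_range_add_finrank_ker A.mulVecLin
  rw [Matrix.rank]
  simp at this
  omega

theorem le_negIdxM_add (A : Matrix (Fin n) (Fin n) ℂ) (hA : A.IsHermitian) :
    n ≤ negIdxM A + negIdxM (-A) + Module.finrank ℂ (LinearMap.ker A.mulVecLin) := by
  let U : Matrix (Fin n) (Fin n) ℂ := hA.eigenvectorUnitary.1
  have hU : Uᴴ * U = 1 := Unitary.coe_star_mul_self hA.eigenvectorUnitary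
  have hD : Uᴴ * A * U = Matrix.diagonal (fun i => (hA.eigenvalues i : ℂ)) := by
    have hs := hA.spectral_theorem
    rw [Unitary.conjStarAlgAut_apply] at hs
    have hs' : A = U * Matrix.diagonal (fun i => (hA.eigenvalues i : ℂ)) * Uᴴ := hs
    calc Uᴴ * A * U
        = (Uᴴ * U) * Matrix.diagonal (fun i => (hA.eigenvalues i : ℂ)) * (Uᴴ * U) := by
          conv_lhs => rw [hs']
          simp only [Matrix.mul_assoc]
      _ = _ := by rw [hU]; simp
  have hD' : Uᴴ * (-A) * U = Matrix.diagonal (fun i => ((-hA.eigenvalues i : ℝ) : ℂ)) := by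
    rw [Matrix.mul_neg, Matrix.neg_mul, hD]
    simp [Matrix.diagonal_neg]
  have h1 := card_neg_le_negIdxM A U _ hU hD
  have h2 := card_neg_le_negIdxM (-A) U _ hU hD'
  have h3 := finrank_ker_add_rank A
  have h4 : A.rank ≤ Fintype.card {i // hA.eigenvalues i < 0}
      + Fintype.card {i // -hA.eigenvalues i < 0} := by
    rw [hA.rank_eq_card_non_zero_eigs]
    simp only [Fintype.card_subtype]
    refine le_trans (Finset.card_le_card ?_) (Finset.card_union_le _ _)
    intro i hi
    simp only [Finset.mem_filter, Finset.mem_univ, true_and, Finset.mem_union] at hi ⊢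
    rcases lt_or_gt_of_ne hi with h | h
    · exact Or.inl h
    · exact Or.inr (by linarith)
  omega

/-- Expansion of the form at `p + A⁻¹ w`. Adding the expansion for `B` at `p - B⁻¹ w` cancels the
mixed terms, which is the orthogonality of `(A⁻¹ w, -B⁻¹ w)` to the diagonal. -/
theorem form_add (A : Matrix (Fin n) (Fin n) ℂ) (hA : A.IsHermitian) (p a w : Fin n → ℂ)
    (ha : A.mulVec a = w) :
    star (p + a) ⬝ᵥ A.mulVec (p + a)
      = star p ⬝ᵥ A.mulVec p + star p ⬝ᵥ w + star w ⬝ᵥ p + star w ⬝ᵥ a := by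
  have h : ∀ z, star a ⬝ᵥ A.mulVec z = star w ⬝ᵥ z := by
    intro z
    rw [← ha, Matrix.star_mulVec, hA.eq, ← Matrix.dotProduct_mulVec]
  rw [star_add, Matrix.mulVec_add, add_dotProduct, dotProduct_add, ha, dotProduct_add, h p,
    ← ha, h a, ha]
  ring

theorem negIdxM_main_le (A B : Matrix (Fin n) (Fin n) ℂ)
    (hA : A.IsHermitian) (hB : B.IsHermitian) (hAu : IsUnit A) (hBu : IsUnit B) :
    negIdxM (A + B) + Module.finrank ℂ (LinearMap.ker (A + B).mulVecLin)
      + negIdxM (A⁻¹ + B⁻¹) + (negIdxM (-A) + negIdxM (-B)) ≤ n + n := by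
  obtain ⟨W, hW, hWn⟩ := exists_finrank_eq_negIdxM (A + B)
  obtain ⟨W', hW', hWn'⟩ := exists_finrank_eq_negIdxM (A⁻¹ + B⁻¹)
  obtain ⟨P, hP, hPn⟩ := exists_finrank_eq_negIdxM (-A)
  obtain ⟨R, hR, hRn⟩ := exists_finrank_eq_negIdxM (-B)
  rw [Matrix.isUnit_iff_isUnit_det] at hAu hBu
  have hAi : ∀ w, A.mulVec (A⁻¹.mulVec w) = w := fun w => by
    rw [Matrix.mulVec_mulVec, Matrix.mul_nonsing_inv _ hAu, Matrix.one_mulVec]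
  have hBi : ∀ w, B.mulVec (B⁻¹.mulVec w) = w := fun w => by
    rw [Matrix.mulVec_mulVec, Matrix.mul_nonsing_inv _ hBu, Matrix.one_mulVec]
  set K := LinearMap.ker (A + B).mulVecLin
  -- The two components of `(x, k, w) ↦ (x + k + A⁻¹ w, x + k - B⁻¹ w)`.
  let p : (W × K) × W' →ₗ[ℂ] (Fin n → ℂ) :=
    (W.subtype.coprod K.subtype) ∘ₗ LinearMap.fst ℂ _ _
  let w : (W × K) × W' →ₗ[ℂ] (Fin n → ℂ) := W'.subtype ∘ₗ LinearMap.snd ℂ _ _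
  let f : (W × K) × W' →ₗ[ℂ] (Fin n → ℂ) × (Fin n → ℂ) :=
    (p + A⁻¹.mulVecLin ∘ₗ w).prod (p - B⁻¹.mulVecLin ∘ₗ w)
  have hf : ∀ x : W, ∀ k : K, ∀ y : W', f ((x, k), y)
      = ((x + k : Fin n → ℂ) + A⁻¹.mulVec y, (x + k : Fin n → ℂ) - B⁻¹.mulVec y) :=
    fun _ _ _ => rfl
  have hk0 : ∀ k : K, (A + B).mulVec (k : Fin n → ℂ) = 0 := fun k => k.2
  -- `Q ∘ f` is the sum of the two restricted forms; `ker (A + B)` does not contribute.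
  have hQ : ∀ x : W, ∀ k : K, ∀ y : W',
      star (f ((x, k), y)).1 ⬝ᵥ A.mulVec (f ((x, k), y)).1
        + star (f ((x, k), y)).2 ⬝ᵥ B.mulVec (f ((x, k), y)).2
      = star (x : Fin n → ℂ) ⬝ᵥ (A + B).mulVec x
        + star (y : Fin n → ℂ) ⬝ᵥ (A⁻¹ + B⁻¹).mulVec y := by
    intro x k y
    have e1 := form_add A hA (x + k) (A⁻¹.mulVec y) y (hAi y)
    have e2 := form_add B hB (x + k) (-B⁻¹.mulVec y) (-y) (by rw [Matrix.mulVec_neg, hBi])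
    have e3 := form_add (A + B) (hA.add hB) x k 0 (hk0 k)
    rw [Matrix.add_mulVec, dotProduct_add] at e3
    rw [hf, sub_eq_add_neg]
    simp only [e1, e2]
    simp only [star_neg, star_zero, neg_dotProduct, dotProduct_neg, dotProduct_zero,
      zero_dotProduct, add_zero, neg_neg] at e3 ⊢
    rw [Matrix.add_mulVec A⁻¹,
      dotProduct_add (star (y : Fin n → ℂ)) (A⁻¹.mulVec y), ← e3]
    ring
  have hle : ∀ x : W, (star (x : Fin n → ℂ) ⬝ᵥ (A + B).mulVec x).re ≤ 0 := by
    intro x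
    by_cases h : (x : Fin n → ℂ) = 0
    · simp [h]
    · exact (hWn x x.2 h).le
  have hle' : ∀ y : W', (star (y : Fin n → ℂ) ⬝ᵥ (A⁻¹ + B⁻¹).mulVec y).re ≤ 0 := by
    intro y
    by_cases h : (y : Fin n → ℂ) = 0
    · simp [h]
    · exact (hWn' y y.2 h).le
  have hinj : Function.Injective f := by
    rw [← LinearMap.ker_eq_bot, LinearMap.ker_eq_bot']
    rintro ⟨⟨x, k⟩, y⟩ h0
    have hq := congrArg Complex.re (hQ x k y)
    rw [h0] at hq
    simp only [Prod.fst_zero, Prod.snd_zero, star_zero, zero_dotProduct, add_zero,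
      Complex.zero_re, Complex.add_re] at hq
    have hx : (x : Fin n → ℂ) = 0 := by
      by_contra h
      linarith [hWn x x.2 h, hle' y]
    have hy : (y : Fin n → ℂ) = 0 := by
      by_contra h
      linarith [hWn' y y.2 h, hle x]
    rw [hf, hx, hy] at h0
    have hk : (k : Fin n → ℂ) = 0 := by simpa using h0
    ext1
    · exact Prod.ext (Subtype.ext hx) (Subtype.ext hk)
    · exact Subtype.ext hy
  have hpos : ∀ {C : Matrix (Fin n) (Fin n) ℂ} {S : Submodule ℂ (Fin n → ℂ)},
      (∀ x ∈ S, x ≠ 0 → (star x ⬝ᵥ (-C).mulVec x).re < 0) →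
      ∀ x ∈ S, 0 ≤ (star x ⬝ᵥ C.mulVec x).re ∧ ((star x ⬝ᵥ C.mulVec x).re ≤ 0 → x = 0) := by
    intro C S hS x hx
    by_cases h : x = 0
    · simp [h]
    · have := hS x hx h
      simp only [Matrix.neg_mulVec, dotProduct_neg, Complex.neg_re] at this
      exact ⟨by linarith, fun h' => by linarith⟩
  have hd : Disjoint (LinearMap.range f) (P.prod R) := by
    rw [Submodule.disjoint_def]
    rintro _ ⟨⟨⟨x, k⟩, y⟩, rfl⟩ ⟨h1, h2⟩
    have hq := congrArg Complex.re (hQ x k y)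
    rw [Complex.add_re, Complex.add_re] at hq
    have a1 := hpos hPn _ h1
    have a2 := hpos hRn _ h2
    have b1 := hle x
    have b2 := hle' y
    exact Prod.ext (a1.2 (by linarith [a2.1])) (a2.2 (by linarith [a1.1]))
  have h := Submodule.finrank_add_finrank_le_of_disjoint hd
  have hPR : Module.finrank ℂ (P.prod R) = Module.finrank ℂ P + Module.finrank ℂ R := by
    have hr : P.prod R = LinearMap.range (P.subtype.prodMap R.subtype) := by
      rw [LinearMap.range_prodMap, Submodule.range_subtype, Submodule.range_subtype]
    rw [hr, LinearMap.finrank_range_of_inj, Module.finrank_prod]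
    exact Function.Injective.prodMap P.injective_subtype R.injective_subtype
  rw [LinearMap.finrank_range_of_inj hinj, hPR] at h
  simp only [Module.finrank_prod, Module.finrank_fin_fun, hW, hW', hP, hR] at h
  exact h

end Index

/-- For invertible Hermitian matrices `A, B`:
`n₋(A + B) + n₀(A + B) + n₋(A⁻¹ + B⁻¹) = n₋(A) + n₋(B)`. -/
theorem morse_index_sum_inverse (n : ℕ) (A B : Matrix (Fin n) (Fin n) ℂ)
    (hA : A.IsHermitian) (hB : B.IsHermitian) (hAu : IsUnit A) (hBu : IsUnit B) :
    negIdxM (A + B) + Module.finrank ℂ ↥(LinearMap.ker (A + B).mulVecLin)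
        + negIdxM (A⁻¹ + B⁻¹)
      = negIdxM A + negIdxM B := by
  have hAd := (Matrix.isUnit_iff_isUnit_det A).1 hAu
  have hBd := (Matrix.isUnit_iff_isUnit_det B).1 hBu
  have hfac : A * (A⁻¹ + B⁻¹) * B = A + B := by
    rw [Matrix.mul_add, Matrix.mul_nonsing_inv _ hAd, Matrix.add_mul, Matrix.mul_assoc,
      Matrix.nonsing_inv_mul _ hBd]
    simp [add_comm]
  have hrank : (A + B).rank = (A⁻¹ + B⁻¹).rank := by
    rw [← hfac, Matrix.rank_mul_eq_left_of_isUnit_det _ _ hBd,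
      Matrix.rank_mul_eq_right_of_isUnit_det _ _ hAd]
  have hnegker : Module.finrank ℂ (LinearMap.ker (-(A + B)).mulVecLin)
      = Module.finrank ℂ (LinearMap.ker (A + B).mulVecLin) := by
    have h : LinearMap.ker (-(A + B)).mulVecLin = LinearMap.ker (A + B).mulVecLin := by
      ext x
      rw [LinearMap.mem_ker, LinearMap.mem_ker, Matrix.mulVecLin_apply, Matrix.mulVecLin_apply,
        Matrix.neg_mulVec, neg_eq_zero]
    rw [h]
  have hiA : (-A)⁻¹ = -A⁻¹ := Matrix.inv_eq_left_inv (by simp [Matrix.nonsing_inv_mul _ hAd])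
  have hiB : (-B)⁻¹ = -B⁻¹ := Matrix.inv_eq_left_inv (by simp [Matrix.nonsing_inv_mul _ hBd])
  have m1 := negIdxM_main_le A B hA hB hAu hBu
  have m2 := negIdxM_main_le (-A) (-B) hA.neg hB.neg hAu.neg hBu.neg
  rw [hiA, hiB, ← neg_add, ← neg_add, hnegker, neg_neg, neg_neg] at m2
  have s1 := le_negIdxM_add (A + B) (hA.add hB)
  have s2 := le_negIdxM_add (A⁻¹ + B⁻¹) (hA.inv.add hB.inv)
  have k1 := finrank_ker_add_rank (A + B)
  have k2 := finrank_ker_add_rank (A⁻¹ + B⁻¹)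
  have sA := le_negIdxM_add A hA
  have sB := le_negIdxM_add B hB
  have kA := finrank_ker_add_rank A
  have kB := finrank_ker_add_rank B
  rw [Matrix.rank_of_isUnit _ hAu, Fintype.card_fin] at kA
  rw [Matrix.rank_of_isUnit _ hBu, Fintype.card_fin] at kB
  have uA := negIdxM_add_neg_le A
  have uB := negIdxM_add_neg_le B
  omega
end

section
/- Let f : Λ(n)³ → ℤ satisfy the Duistermaat axioms, and let L₁, L₂, L₃ be Lagrangian planes such that L₃ ∩ L₁ = {0}, L₃ ∩ L₂ = {0} and L₃ ∩ G_∞ = {0}, so that L₃ = G_C for an n×n Hermitian matrix C. If M₁ and M₂ are n×n Hermitian matrices with G_{M₁} = (L₁ − G_C)^{−1} and G_{M₂} = (L₂ − G_C)^{−1}, then f(L₁, L₂, L₃) = n_−(M₁ − M₂). -/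
/-!
The statement reduces to the normalization axiom by one symplectic change of coordinates.
In the coordinate `w = v - C u`, the hypothesis on `Lᵢ` reads `(u, v) ∈ Lᵢ ↔ u = Mᵢ w`, and `L₃ = G_C`
is `{w = 0}`. The map `S (u, v) = (w, M₁ w - u)` is the composite of the shear by `C`, the rotation
`(u, w) ↦ (w, -u)` and the shear by `-M₁`; it is symplectic because `C` and `M₁` are Hermitian, and
it sends `L₁`, `L₂`, `L₃` to `G_0`, `G_{M₁ - M₂}`, `G_∞` respectively. Symplectic invariance and
normalization then give the value `n₋(M₁ - M₂)`.
-/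

open Matrix

/-- The Hermitian symplectic space `ℂⁿ ⊕ ℂⁿ`. -/
abbrev SympSpace (n : ℕ) := (Fin n → ℂ) × (Fin n → ℂ)

/-- The symplectic form `ω((x₁,x₂),(y₁,y₂)) = ⟨x₁,y₂⟩ − ⟨x₂,y₁⟩`. -/
noncomputable def omegaForm {n : ℕ} (u v : SympSpace n) : ℂ :=
  star u.1 ⬝ᵥ v.2 - star u.2 ⬝ᵥ v.1

/-- A subspace is Lagrangian iff it coincides with its symplectic complement. -/
def IsLagrangian {n : ℕ} (L : Submodule ℂ (SympSpace n)) : Prop :=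
  ∀ v, v ∈ L ↔ ∀ u ∈ L, omegaForm u v = 0

/-- The Lagrangian Grassmannian `Λ(n)`. -/
abbrev LagGr (n : ℕ) := {L : Submodule ℂ (SympSpace n) // IsLagrangian L}

/-- The graph `G_M = {(x, Mx)}` of a matrix `M`. -/
noncomputable def graphOf {n : ℕ} (M : Matrix (Fin n) (Fin n) ℂ) :
    Submodule ℂ (SympSpace n) := LinearMap.graph M.mulVecLin

/-- The vertical subspace `G_∞ = 0 ⊕ ℂⁿ`. -/
noncomputable def vertSub (n : ℕ) : Submodule ℂ (SympSpace n) :=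
  (⊥ : Submodule ℂ (Fin n → ℂ)).prod (⊤ : Submodule ℂ (Fin n → ℂ))

/-- A symplectic transformation: a bijective linear map preserving `ω`. -/
def IsSymplecticMap {n : ℕ} (S : SympSpace n ≃ₗ[ℂ] SympSpace n) : Prop :=
  ∀ u v, omegaForm (S u) (S v) = omegaForm u v

/-- The Duistermaat axioms for `f : Λ(n)³ → ℤ`: normalization, symplectic invariance
and the cocycle property. -/
def SatisfiesDuiAxioms {n : ℕ} (f : LagGr n → LagGr n → LagGr n → ℤ) : Prop :=
  (∀ (A : Matrix (Fin n) (Fin n) ℂ), A.IsHermitian →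
    ∀ L₁ L₂ L₃ : LagGr n,
      L₁.val = graphOf (0 : Matrix (Fin n) (Fin n) ℂ) →
      L₂.val = graphOf A → L₃.val = vertSub n →
      f L₁ L₂ L₃ = negIdxM A) ∧
  (∀ S : SympSpace n ≃ₗ[ℂ] SympSpace n, IsSymplecticMap S →
    ∀ L₁ L₂ L₃ M₁ M₂ M₃ : LagGr n,
      M₁.val = (L₁.val).map S.toLinearMap →
      M₂.val = (L₂.val).map S.toLinearMap →
      M₃.val = (L₃.val).map S.toLinearMap →
      f M₁ M₂ M₃ = f L₁ L₂ L₃) ∧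
  (∀ L₁ L₂ L₃ L₄ : LagGr n,
    f L₁ L₂ L₃ - f L₁ L₂ L₄ + f L₁ L₃ L₄ - f L₂ L₃ L₄ = 0)

/-- The shear map `(u, v) ↦ (u, v − Au)`; the image of a Lagrangian plane `L` under
this map is the difference `L − G_A` of self-adjoint linear relations. -/
noncomputable def shearMap {n : ℕ} (A : Matrix (Fin n) (Fin n) ℂ) :
    SympSpace n →ₗ[ℂ] SympSpace n :=
  (LinearMap.fst ℂ (Fin n → ℂ) (Fin n → ℂ)).prod
    ((LinearMap.snd ℂ (Fin n → ℂ) (Fin n → ℂ)) -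
      A.mulVecLin.comp (LinearMap.fst ℂ (Fin n → ℂ) (Fin n → ℂ)))

/-- The swap map `(u, v) ↦ (v, u)`; the image of a Lagrangian plane `L` under this map
is the inverse `L⁻¹` of the corresponding self-adjoint linear relation. -/
noncomputable def swapMap (n : ℕ) : SympSpace n →ₗ[ℂ] SympSpace n :=
  (LinearMap.snd ℂ (Fin n → ℂ) (Fin n → ℂ)).prod
    (LinearMap.fst ℂ (Fin n → ℂ) (Fin n → ℂ))

/-- The symplectic coordinate change `(u, v) ↦ (w, M w - u)` with `w = v - C u`. -/
noncomputable def straighten {n : ℕ} (C M : Matrix (Fin n) (Fin n) ℂ) :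
    SympSpace n ≃ₗ[ℂ] SympSpace n where
  toFun p := (p.2 - C *ᵥ p.1, M *ᵥ (p.2 - C *ᵥ p.1) - p.1)
  invFun q := (M *ᵥ q.1 - q.2, q.1 + C *ᵥ (M *ᵥ q.1 - q.2))
  map_add' p q := by
    ext i <;> simp [mulVec_add, mulVec_sub] <;> ring
  map_smul' c p := by
    ext i <;> simp [mulVec_smul, mulVec_sub] <;> ring
  left_inv p := by simp
  right_inv q := by simp

theorem straighten_apply {n : ℕ} (C M : Matrix (Fin n) (Fin n) ℂ) (p : SympSpace n) :
    straighten C M p = (p.2 - C *ᵥ p.1, M *ᵥ (p.2 - C *ᵥ p.1) - p.1) := rfl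

theorem star_mulVec_dotProduct {n : ℕ} {A : Matrix (Fin n) (Fin n) ℂ} (hA : A.IsHermitian)
    (x y : Fin n → ℂ) : star (A *ᵥ x) ⬝ᵥ y = star x ⬝ᵥ A *ᵥ y := by
  rw [star_mulVec, hA.eq, dotProduct_mulVec]

theorem isSymplecticMap_straighten {n : ℕ} {C M : Matrix (Fin n) (Fin n) ℂ}
    (hC : C.IsHermitian) (hM : M.IsHermitian) : IsSymplecticMap (straighten C M) := by
  intro p q
  simp only [omegaForm, straighten_apply, star_sub, sub_dotProduct, dotProduct_sub, mulVec_sub,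
    star_mulVec_dotProduct hC, star_mulVec_dotProduct hM]
  ring

theorem IsLagrangian.map_symplectic {n : ℕ} {L : Submodule ℂ (SympSpace n)} (hL : IsLagrangian L)
    {S : SympSpace n ≃ₗ[ℂ] SympSpace n} (hS : IsSymplecticMap S) :
    IsLagrangian (L.map S.toLinearMap) := by
  intro v
  obtain ⟨v, rfl⟩ := S.surjective v
  have hmem : S v ∈ L.map S.toLinearMap ↔ v ∈ L := by simp
  rw [hmem, hL v]
  constructor
  · rintro h _ ⟨u, hu, rfl⟩
    exact (hS u v).trans (h u hu)
  · intro h u hu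
    rw [← hS u v]
    exact h _ ⟨u, hu, rfl⟩

theorem mem_graphOf {n : ℕ} {M : Matrix (Fin n) (Fin n) ℂ} {p : SympSpace n} :
    p ∈ graphOf M ↔ p.2 = M *ᵥ p.1 := by
  simp [graphOf, LinearMap.mem_graph_iff]

/-- The relation `G_M = (L - G_C)⁻¹` read as an equation for `L`. -/
theorem mem_iff_of_graphOf_eq {n : ℕ} {C M : Matrix (Fin n) (Fin n) ℂ}
    {L : Submodule ℂ (SympSpace n)}
    (h : graphOf M = (L.map (shearMap C)).map (swapMap n)) (p : SympSpace n) :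
    p ∈ L ↔ p.1 = M *ᵥ (p.2 - C *ᵥ p.1) := by
  have key : (p.2 - C *ᵥ p.1, p.1) ∈ (L.map (shearMap C)).map (swapMap n) ↔ p ∈ L := by
    constructor
    · rintro ⟨_, ⟨q, hq, rfl⟩, hqp⟩
      have h2 : q.2 - C *ᵥ q.1 = p.2 - C *ᵥ p.1 := congrArg Prod.fst hqp
      have h1 : q.1 = p.1 := congrArg Prod.snd hqp
      rw [h1] at h2
      rwa [← (Prod.ext h1 (sub_left_injective h2) : q = p)]
    · intro hp
      exact ⟨_, ⟨p, hp, rfl⟩, rfl⟩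
  rw [← key, ← h, mem_graphOf]

theorem eq_map_of_forall {n : ℕ} {L K : Submodule ℂ (SympSpace n)}
    (S : SympSpace n ≃ₗ[ℂ] SympSpace n) (h : ∀ p, p ∈ L ↔ S p ∈ K) :
    L.map S.toLinearMap = K := by
  ext q
  obtain ⟨p, rfl⟩ := S.surjective q
  rw [← h p]
  simp

/-- If `L₃` is transversal to `L₁`, `L₂` and `G_∞` (so `L₃ = G_C` for a Hermitian `C`),
and `G_{M₁} = (L₁ − G_C)⁻¹`, `G_{M₂} = (L₂ − G_C)⁻¹` with `M₁, M₂` Hermitian, then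
`f(L₁, L₂, L₃) = n₋(M₁ − M₂)`. -/
theorem duistermaat_index_transversal (n : ℕ) (hn : 1 ≤ n)
    (f : LagGr n → LagGr n → LagGr n → ℤ) (hf : SatisfiesDuiAxioms f)
    (L₁ L₂ L₃ : LagGr n) (C M₁ M₂ : Matrix (Fin n) (Fin n) ℂ)
    (hC : C.IsHermitian) (hM₁ : M₁.IsHermitian) (hM₂ : M₂.IsHermitian)
    (ht₁ : L₃.val ⊓ L₁.val = ⊥) (ht₂ : L₃.val ⊓ L₂.val = ⊥)
    (htv : L₃.val ⊓ vertSub n = ⊥)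
    (hL₃ : L₃.val = graphOf C)
    (hG₁ : graphOf M₁ = ((L₁.val).map (shearMap C)).map (swapMap n))
    (hG₂ : graphOf M₂ = ((L₂.val).map (shearMap C)).map (swapMap n)) :
    f L₁ L₂ L₃ = negIdxM (M₁ - M₂) := by
  have hS := isSymplecticMap_straighten hC hM₁
  have e₁ : L₁.val.map (straighten C M₁).toLinearMap = graphOf 0 := by
    refine eq_map_of_forall _ fun p => ?_
    rw [mem_iff_of_graphOf_eq hG₁, mem_graphOf, straighten_apply, zero_mulVec, sub_eq_zero, eq_comm]
  have e₂ : L₂.val.map (straighten C M₁).toLinearMap = graphOf (M₁ - M₂) := by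
    refine eq_map_of_forall _ fun p => ?_
    rw [mem_iff_of_graphOf_eq hG₂, mem_graphOf, straighten_apply, sub_mulVec, sub_right_inj]
  have e₃ : L₃.val.map (straighten C M₁).toLinearMap = vertSub n := by
    refine eq_map_of_forall _ fun p => ?_
    rw [hL₃, mem_graphOf, straighten_apply, vertSub, Submodule.mem_prod]
    simp [sub_eq_zero]
  obtain ⟨hnorm, hinv, -⟩ := hf
  rw [← hinv _ hS L₁ L₂ L₃ ⟨_, L₁.2.map_symplectic hS⟩ ⟨_, L₂.2.map_symplectic hS⟩
    ⟨_, L₃.2.map_symplectic hS⟩ rfl rfl rfl]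
  exact hnorm (M₁ - M₂) (hM₁.sub hM₂) _ _ _ e₁ e₂ e₃
end
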